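/- Dynamical Hardy uncertainty principle for the free Schrödinger evolution: Let d ≥ 1 be an integer, T > 0, and α, β, C, C' > 0 real numbers with α·β > 1/(16·T²). Let f : ℝ^d → ℂ be measurable with |f(y)| ≤ C·exp(−α·‖y‖²) for all y (in particular f is integrable), and define u_T : ℝ^d → ℂ by u_T(x) = ∫_{ℝ^d} exp(i·‖x−y‖²/(4T))·f(y) dy. If |u_T(x)| ≤ C'·exp(−β·‖x‖²) for all x ∈ ℝ^d, then f = 0 almost everywhere. -/

import Mathlib

open MeasureTheory Real

/-!
Expanding `‖x - y‖²` turns `u_T` into a unimodular factor times the Fourier transform, at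
`x / (4πT)`, of `f` multiplied by the phase `exp (i ‖y‖² / (4T))`. The claim thus becomes Hardy's
theorem: if `f` and `𝓕 f` are bounded by multiples of `exp (-a ‖y‖²)` and `exp (-b ‖ξ‖²)` with
`π² < a b`, then `f = 0`.

Along a line `ℝ w`, Gaussian decay of `f` makes `𝓕 f` extend to an entire function `h` with
`|h(x + iy)| ≤ A exp (a' y²)`, while `|h(x)| ≤ B exp (-b' x²)`, where `a' < b'`. For
`a' < c < b'` the function `exp (c z²) h(z)` has order two, is bounded on the real axis and outside
the two sectors `|y| < m |x|` for a suitable slope `m`. The real axis cuts these into sectors of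
angle less than `π / 2`, so by Phragmén–Lindelöf the function is bounded. By Liouville it is
constant, and it tends to `0` along the real axis.
-/

open scoped Complex FourierTransform RealInnerProductSpace SchwartzMap

section PhragmenLindelof

variable {E : Type*} [NormedAddCommGroup E] [NormedSpace ℂ E]

/-- The open angular sector of nonzero complex numbers whose principal argument lies strictly
between `θ₁` and `θ₂`. -/
def openSector (θ₁ θ₂ : ℝ) : Set ℂ := {z | z ≠ 0 ∧ z.arg ∈ Set.Ioo θ₁ θ₂}

lemma norm_le_of_arg_mem_Icc {f : ℂ → E} {θ₁ θ₂ M A B ρ : ℝ} (hθ₁ : -π ≤ θ₁)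
    (hθ₂ : θ₂ ≤ π) (hρ : 0 ≤ ρ) (hρθ : ρ < π / (θ₂ - θ₁))
    (hf : DiffContOnCl ℂ f (openSector θ₁ θ₂))
    (hgrowth : ∀ z ∈ openSector θ₁ θ₂, ‖f z‖ ≤ A * rexp (B * ‖z‖ ^ ρ))
    (hray₁ : ∀ r : ℝ, 0 < r → ‖f (r * cexp (θ₁ * Complex.I))‖ ≤ M)
    (hray₂ : ∀ r : ℝ, 0 < r → ‖f (r * cexp (θ₂ * Complex.I))‖ ≤ M)
    {z : ℂ} (hz₀ : z ≠ 0) (hz : z.arg ∈ Set.Icc θ₁ θ₂) : ‖f z‖ ≤ M := by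
  have hmem : Set.MapsTo cexp (Complex.im ⁻¹' Set.Ioo θ₁ θ₂) (openSector θ₁ θ₂) := fun w hw ↦ by
    refine ⟨Complex.exp_ne_zero w, ?_⟩
    simpa [Complex.arg_exp, (toIocMod_eq_self two_pi_pos).2
      (⟨hθ₁.trans_lt hw.1, by linarith [hw.2]⟩ : w.im ∈ Set.Ioc (-π) (-π + 2 * π))] using hw
  have hgrowth_exp : (f ∘ cexp) =O[Filter.comap (abs ∘ Complex.re) Filter.atTop ⊓
      Filter.principal (Complex.im ⁻¹' Set.Ioo θ₁ θ₂)]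
      fun w ↦ rexp (|B| * rexp (ρ * |w.re|)) := by
    refine .of_bound |A| (Filter.mem_inf_of_right fun w hw ↦ (hgrowth _ (hmem hw)).trans ?_)
    rw [Complex.norm_exp, ← exp_mul, norm_of_nonneg (exp_nonneg _), mul_comm w.re]
    gcongr
    exacts [le_abs_self A, le_abs_self B, le_abs_self w.re]
  have hpolar (w : ℂ) : cexp w = rexp w.re * cexp (w.im * Complex.I) := by
    rw [Complex.ofReal_exp, ← Complex.exp_add, Complex.re_add_im]
  rw [← Complex.exp_log hz₀]
  refine PhragmenLindelof.horizontal_strip (f := f ∘ cexp)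
    (hf.comp Complex.differentiable_exp.diffContOnCl hmem) ⟨ρ, hρθ, |B|, hgrowth_exp⟩
    (fun w hw ↦ ?_) (fun w hw ↦ ?_) ?_ ?_
  · simpa only [Function.comp_apply, hpolar w, hw] using hray₁ _ (exp_pos w.re)
  · simpa only [Function.comp_apply, hpolar w, hw] using hray₂ _ (exp_pos w.re)
  · exact (Complex.log_im z).symm ▸ hz.1
  · exact (Complex.log_im z).symm ▸ hz.2

lemma norm_le_of_abs_arg_le {h : ℂ → E} (hh : Differentiable ℂ h) {θ A B M : ℝ}
    (hθ₀ : 0 < θ) (hθ : θ < π / 2) (hgrowth : ∀ z, ‖h z‖ ≤ A * rexp (B * ‖z‖ ^ 2))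
    (hreal : ∀ r : ℝ, 0 ≤ r → ‖h r‖ ≤ M)
    (hray_neg : ∀ r : ℝ, 0 ≤ r → ‖h (r * cexp ((-θ : ℝ) * Complex.I))‖ ≤ M)
    (hray_pos : ∀ r : ℝ, 0 ≤ r → ‖h (r * cexp (θ * Complex.I))‖ ≤ M)
    {z : ℂ} (hz : |z.arg| ≤ θ) : ‖h z‖ ≤ M := by
  rcases eq_or_ne z 0 with rfl | hz₀
  · simpa using hreal 0 le_rfl
  have hangle : 2 < π / θ := by
    rw [lt_div_iff₀ hθ₀]
    linarith
  have hgrowth_rpow (w : ℂ) : ‖h w‖ ≤ A * rexp (B * ‖w‖ ^ (2 : ℝ)) := by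
    simpa only [rpow_two] using hgrowth w
  have hreal_ray (r : ℝ) (hr : 0 < r) : ‖h (r * cexp ((0 : ℝ) * Complex.I))‖ ≤ M := by
    simpa using hreal r hr.le
  rcases le_total 0 z.arg with hpos | hneg
  · exact norm_le_of_arg_mem_Icc (by linarith) (by linarith) zero_le_two (by simpa using hangle)
      hh.diffContOnCl (fun w _ ↦ hgrowth_rpow w) hreal_ray (fun r hr ↦ hray_pos r hr.le)
      hz₀ ⟨hpos, (abs_le.1 hz).2⟩
  · exact norm_le_of_arg_mem_Icc (by linarith) (by linarith) zero_le_two (by simpa using hangle)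
      hh.diffContOnCl (fun w _ ↦ hgrowth_rpow w) (fun r hr ↦ hray_neg r hr.le) hreal_ray
      hz₀ ⟨(abs_le.1 hz).1, hneg⟩

lemma abs_arg_le_arcsin {z : ℂ} {s : ℝ} (hz : 0 ≤ z.re) (hs : |z.im / ‖z‖| ≤ s) :
    |z.arg| ≤ arcsin s := by
  rw [Complex.arg_of_re_nonneg hz, abs_le, ← arcsin_neg]
  exact ⟨monotone_arcsin (abs_le.1 hs).1, monotone_arcsin (abs_le.1 hs).2⟩

lemma norm_le_of_norm_le_exp_re_sq_sub_im_sq_of_re_nonneg {h : ℂ → E} (hh : Differentiable ℂ h)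
    {p q M : ℝ} (hp : 0 < p) (hq : 0 < q)
    (hplane : ∀ z : ℂ, ‖h z‖ ≤ M * rexp (p * z.re ^ 2 - q * z.im ^ 2))
    (hreal : ∀ r : ℝ, 0 ≤ r → ‖h r‖ ≤ M) {z : ℂ} (hz : 0 ≤ z.re) : ‖h z‖ ≤ M := by
  have hM : 0 ≤ M := (norm_nonneg _).trans (hreal 0 le_rfl)
  have hsteep (w : ℂ) (hw : p * w.re ^ 2 ≤ q * w.im ^ 2) : ‖h w‖ ≤ M :=
    (hplane w).trans (mul_le_of_le_one_right hM (exp_le_one_iff.2 (sub_nonpos.2 hw)))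
  rcases le_total (p * z.re ^ 2) (q * z.im ^ 2) with hzsteep | hzflat
  · exact hsteep z hzsteep
  rcases eq_or_ne z 0 with rfl | hz₀
  · simpa using hreal 0 le_rfl
  -- The exponent `p x² - q y²` vanishes on the rays `arg = ± arcsin s`.
  set s : ℝ := √(p / (p + q))
  have hs : s ^ 2 = p / (p + q) := sq_sqrt (by positivity)
  have hs₀ : 0 < s := by positivity
  have hs₁ : s < 1 := by
    rw [sqrt_lt' one_pos, one_pow, div_lt_one (by positivity)]
    linarith
  have hsin : sin (arcsin s) = s := sin_arcsin (by linarith) hs₁.le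
  have hgrowth (w : ℂ) : ‖h w‖ ≤ M * rexp (p * ‖w‖ ^ 2) := by
    refine (hplane w).trans ?_
    rw [← Complex.sq_norm_sub_sq_im]
    gcongr
    nlinarith [sq_nonneg w.im]
  have hray (φ : ℝ) (hφ : sin φ ^ 2 = s ^ 2) (r : ℝ) : ‖h (r * cexp (φ * Complex.I))‖ ≤ M := by
    refine hsteep _ (le_of_eq ?_)
    rw [Complex.re_ofReal_mul, Complex.im_ofReal_mul, Complex.exp_ofReal_mul_I_re,
      Complex.exp_ofReal_mul_I_im, mul_pow, mul_pow, cos_sq', hφ, hs]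
    field_simp
    ring
  refine norm_le_of_abs_arg_le hh (arcsin_pos.2 hs₀) (arcsin_lt_pi_div_two.2 hs₁) hgrowth hreal
    (fun r _ ↦ hray _ (by rw [sin_neg, hsin, neg_sq]) r) (fun r _ ↦ hray _ (by rw [hsin]) r)
    (abs_arg_le_arcsin hz (abs_le_sqrt ?_))
  rw [div_pow, div_le_div_iff₀ (by positivity) (by positivity), Complex.sq_norm,
    Complex.normSq_apply]
  linarith

lemma norm_le_of_norm_le_exp_re_sq_sub_im_sq {h : ℂ → E} (hh : Differentiable ℂ h)
    {p q M : ℝ} (hp : 0 < p) (hq : 0 < q)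
    (hplane : ∀ z : ℂ, ‖h z‖ ≤ M * rexp (p * z.re ^ 2 - q * z.im ^ 2))
    (hreal : ∀ x : ℝ, ‖h x‖ ≤ M) (z : ℂ) : ‖h z‖ ≤ M := by
  rcases le_total 0 z.re with hz | hz
  · exact norm_le_of_norm_le_exp_re_sq_sub_im_sq_of_re_nonneg hh hp hq hplane
      (fun x _ ↦ hreal x) hz
  · simpa using norm_le_of_norm_le_exp_re_sq_sub_im_sq_of_re_nonneg (h := fun w ↦ h (-w))
      (z := -z) (hh.comp differentiable_neg) hp hq (fun w ↦ by simpa using hplane (-w))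
      (fun x _ ↦ by simpa using hreal (-x)) (by simpa using hz)

theorem eq_zero_of_norm_le_exp_im_sq_of_norm_le_exp_neg_sq {h : ℂ → E}
    (hh : Differentiable ℂ h) {a b A B : ℝ} (ha : 0 ≤ a) (hab : a < b)
    (hplane : ∀ z : ℂ, ‖h z‖ ≤ A * rexp (a * z.im ^ 2))
    (hreal : ∀ x : ℝ, ‖h x‖ ≤ B * rexp (-b * x ^ 2)) : h = 0 := by
  obtain ⟨c, hac, hcb⟩ := exists_between hab
  set H : ℂ → E := fun z ↦ cexp (c * z ^ 2) • h z
  have hH : Differentiable ℂ H := by fun_prop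
  have hHnorm (z : ℂ) : ‖H z‖ = rexp (c * (z.re ^ 2 - z.im ^ 2)) * ‖h z‖ := by
    rw [norm_smul, Complex.norm_exp, Complex.re_ofReal_mul, pow_two, Complex.mul_re]
    ring_nf
  have hHplane (z : ℂ) : ‖H z‖ ≤ A * rexp (c * z.re ^ 2 - (c - a) * z.im ^ 2) := calc
    ‖H z‖ ≤ rexp (c * (z.re ^ 2 - z.im ^ 2)) * (A * rexp (a * z.im ^ 2)) := by
      rw [hHnorm]
      gcongr
      exact hplane z
    _ = _ := by rw [mul_left_comm, ← exp_add]; ring_nf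
  have hHreal (x : ℝ) : ‖H x‖ ≤ B * rexp (-(b - c) * x ^ 2) := calc
    ‖H x‖ ≤ rexp (c * x ^ 2) * (B * rexp (-b * x ^ 2)) := by
      rw [hHnorm, Complex.ofReal_re, Complex.ofReal_im, zero_pow two_ne_zero, sub_zero]
      gcongr
      exact hreal x
    _ = _ := by rw [mul_left_comm, ← exp_add]; ring_nf
  have hB : 0 ≤ B := by simpa using (norm_nonneg _).trans (hreal 0)
  have hHbounded (z : ℂ) : ‖H z‖ ≤ max A B :=
    norm_le_of_norm_le_exp_re_sq_sub_im_sq hH (ha.trans_lt hac) (sub_pos.2 hac)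
      (fun w ↦ (hHplane w).trans (by gcongr; exact le_max_left A B))
      (fun x ↦ (hHreal x).trans <| (mul_le_of_le_one_right hB <| exp_le_one_iff.2 <|
        mul_nonpos_of_nonpos_of_nonneg (by linarith) (sq_nonneg x)).trans (le_max_right A B)) z
  have hHconst (z w : ℂ) : H z = H w := hH.apply_eq_apply_of_bounded
    (isBounded_iff_forall_norm_le.2 ⟨max A B, Set.forall_mem_range.2 hHbounded⟩) z w
  have hdecay : Filter.Tendsto (fun x : ℝ ↦ B * rexp (-(b - c) * x ^ 2)) Filter.atTop (nhds 0) := by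
    simpa using (tendsto_exp_atBot.comp ((Filter.tendsto_pow_atTop
      two_ne_zero).const_mul_atTop_of_neg (by linarith : -(b - c) < 0))).const_mul B
  funext z
  have hHz : H z = 0 := norm_le_zero_iff.1 <| ge_of_tendsto' hdecay fun x ↦ by
    rw [hHconst z x]
    exact hHreal x
  exact (smul_eq_zero.1 hHz).resolve_left (Complex.exp_ne_zero _)

end PhragmenLindelof

section LaplaceIntegral

variable {E α : Type*} [NormedAddCommGroup E] [NormedSpace ℂ E] [MeasurableSpace α]
  {μ : Measure α}

lemma rexp_mul_mul_abs_le {r R : ℝ} (hr : |r| + 1 ≤ R) (x : ℝ) :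
    rexp (r * x) * |x| ≤ rexp (R * x) + rexp (-R * x) := calc
  rexp (r * x) * |x| ≤ rexp (|r| * |x|) * rexp |x| :=
    mul_le_mul (exp_le_exp.2 ((le_abs_self _).trans_eq (abs_mul r x)))
      (by linarith [add_one_le_exp |x|]) (abs_nonneg x) (exp_nonneg _)
  _ = rexp ((|r| + 1) * |x|) := by rw [← exp_add]; ring_nf
  _ ≤ rexp |R * x| := by
    rw [abs_mul]
    gcongr
    exact hr.trans (le_abs_self R)
  _ ≤ rexp (R * x) + rexp (-R * x) := by simpa using exp_abs_le (R * x)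

lemma differentiable_integral_cexp_mul_smul {X : α → ℝ} {g : α → E}
    (hX : AEStronglyMeasurable X μ)
    (hg : ∀ t : ℝ, Integrable (fun x ↦ rexp (t * X x) • g x) μ) :
    Differentiable ℂ fun z : ℂ ↦ ∫ x, cexp (z * X x) • g x ∂μ := by
  intro z₀
  have hgm : AEStronglyMeasurable g μ := by simpa using (hg 0).aestronglyMeasurable
  have hXm : AEStronglyMeasurable (fun x ↦ (X x : ℂ)) μ :=
    Complex.continuous_ofReal.comp_aestronglyMeasurable hX
  have hexp (z : ℂ) : AEStronglyMeasurable (fun x ↦ cexp (z * X x)) μ :=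
    Complex.continuous_exp.comp_aestronglyMeasurable (hXm.const_mul z)
  have hintegrable : Integrable (fun x ↦ cexp (z₀ * X x) • g x) μ :=
    (hg z₀.re).congr' ((hexp z₀).smul hgm)
      (.of_forall fun x ↦ by simp [norm_smul, Complex.norm_exp])
  set R : ℝ := |z₀.re| + 2
  refine (hasDerivAt_integral_of_dominated_loc_of_deriv_le (Metric.ball_mem_nhds z₀ one_pos)
    (F' := fun z x ↦ (cexp (z * X x) * X x) • g x)
    (.of_forall fun z ↦ (hexp z).smul hgm) hintegrable (((hexp z₀).mul hXm).smul hgm)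
    (.of_forall fun x z hz ↦ ?_) ((hg R).norm.add (hg (-R)).norm)
    (.of_forall fun x z _ ↦ ?_)).2.differentiableAt
  · have hre : |z.re| + 1 ≤ R := by
      have := (Complex.abs_re_le_norm (z - z₀)).trans (mem_ball_iff_norm.1 hz).le
      have := abs_sub_abs_le_abs_sub z.re z₀.re
      simp only [Complex.sub_re, R] at *
      linarith
    simp only [norm_smul, norm_mul, Complex.norm_exp, Complex.re_mul_ofReal, Complex.norm_real,
      Real.norm_eq_abs, abs_exp, Pi.add_apply, ← add_mul]
    gcongr
    exact rexp_mul_mul_abs_le hre (X x)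
  · simpa using (((hasDerivAt_id z).mul_const (X x : ℂ)).cexp.smul_const (g x))

end LaplaceIntegral

section GaussianIntegral

variable {V : Type*} [NormedAddCommGroup V] [InnerProductSpace ℝ V] [FiniteDimensional ℝ V]
  [MeasurableSpace V] [BorelSpace V] {a : ℝ}

lemma integrable_rexp_neg_mul_sq_norm_add_inner (ha : 0 < a) (w : V) :
    Integrable fun y : V ↦ rexp (-a * ‖y‖ ^ 2 + ⟪w, y⟫) := by
  simpa [Complex.norm_exp, ← Complex.ofReal_pow] using
    (GaussianFourier.integrable_cexp_neg_mul_sq_norm_add (b := a) (by simpa using ha) 1 w).norm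

lemma integral_rexp_neg_mul_sq_norm_add_inner (ha : 0 < a) (w : V) :
    ∫ y : V, rexp (-a * ‖y‖ ^ 2 + ⟪w, y⟫) =
      (π / a) ^ (Module.finrank ℝ V / 2 : ℝ) * rexp (‖w‖ ^ 2 / (4 * a)) := by
  have hsquare (y : V) : -a * ‖y‖ ^ 2 + ⟪w, y⟫ =
      -a * ‖y - (2 * a)⁻¹ • w‖ ^ 2 + ‖w‖ ^ 2 / (4 * a) := by
    rw [norm_sub_sq_real, real_inner_smul_right, real_inner_comm, norm_smul, mul_pow,
      Real.norm_eq_abs, sq_abs]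
    field_simp
    ring
  simp_rw [hsquare, exp_add, integral_mul_const]
  rw [integral_sub_right_eq_self (fun y ↦ rexp (-a * ‖y‖ ^ 2)),
    GaussianFourier.integral_rexp_neg_mul_sq_norm ha]

end GaussianIntegral

section FourierAlong

variable {V E : Type*} [NormedAddCommGroup V] [InnerProductSpace ℝ V]

lemma norm_cexp_neg_two_pi_I_mul_inner (w y : V) (z : ℂ) :
    ‖cexp (-2 * π * Complex.I * z * ⟪w, y⟫)‖ = rexp ⟪(2 * π * z.im) • w, y⟫ := by
  rw [Complex.norm_exp, real_inner_smul_left]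
  simp

variable [FiniteDimensional ℝ V] [MeasurableSpace V] [BorelSpace V]
  [NormedAddCommGroup E] [NormedSpace ℂ E]

lemma ae_eq_zero_of_fourier_eq_zero [CompleteSpace E] {f : V → E} (hf : Integrable f)
    (hfourier : 𝓕 f = 0) : f =ᵐ[volume] 0 := by
  refine ae_eq_zero_of_integral_contDiff_smul_eq_zero hf.locallyIntegrable fun ψ hψ hψc ↦ ?_
  have hψc' : HasCompactSupport fun x ↦ (ψ x : ℂ) := hψc.comp_left Complex.ofReal_zero
  let Ψ : 𝓢(V, ℂ) := hψc'.toSchwartzMap (Complex.ofRealCLM.contDiff.comp hψ)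
  let Φ : 𝓢(V, ℂ) := 𝓕⁻ Ψ
  have hΦ : 𝓕 (Φ : V → ℂ) = Ψ := by
    rw [← SchwartzMap.fourier_coe, FourierTransform.fourier_fourierInv_eq]
  calc ∫ x, ψ x • f x = ∫ x, 𝓕 (Φ : V → ℂ) x • f x := by rw [hΦ]; rfl
    _ = ∫ x, Φ x • 𝓕 f x := by
        have hswap := VectorFourier.integral_fourierIntegral_smul_eq_flip (L := innerₗ V)
          (μ := volume) (ν := volume) continuous_fourierChar continuous_inner Φ.integrable hf
        rwa [flip_innerₗ] at hswap
    _ = 0 := by simp [hfourier]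

/-- The restriction of the Fourier transform of `f` to the line `ℝ w`, with the parameter along
the line allowed to be complex. -/
noncomputable def fourierAlong (f : V → E) (w : V) (z : ℂ) : E :=
  ∫ y, cexp (-2 * π * Complex.I * z * ⟪w, y⟫) • f y

lemma fourierAlong_ofReal (f : V → E) (w : V) (t : ℝ) : fourierAlong f w t = 𝓕 f (t • w) := by
  rw [Real.fourier_eq', fourierAlong]
  refine integral_congr_ae (.of_forall fun y ↦ ?_)
  simp only [real_inner_smul_right, real_inner_comm w y]
  push_cast
  ring_nf

variable {f : V → E} {a C : ℝ}

variable (hdecay : ∀ᵐ y, ‖f y‖ ≤ C * rexp (-a * ‖y‖ ^ 2))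
include hdecay

lemma ae_norm_rexp_inner_smul_le (w : V) :
    ∀ᵐ y, ‖rexp ⟪w, y⟫ • f y‖ ≤ C * rexp (-a * ‖y‖ ^ 2 + ⟪w, y⟫) := by
  filter_upwards [hdecay] with y hy
  calc ‖rexp ⟪w, y⟫ • f y‖ = rexp ⟪w, y⟫ * ‖f y‖ := by simp [norm_smul]
    _ ≤ rexp ⟪w, y⟫ * (C * rexp (-a * ‖y‖ ^ 2)) := by gcongr
    _ = C * rexp (-a * ‖y‖ ^ 2 + ⟪w, y⟫) := by rw [exp_add]; ring

lemma integrable_rexp_inner_smul (ha : 0 < a) (hf : AEStronglyMeasurable f) (w : V) :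
    Integrable fun y ↦ rexp ⟪w, y⟫ • f y :=
  ((integrable_rexp_neg_mul_sq_norm_add_inner ha w).const_mul C).mono'
    ((by fun_prop : Continuous fun y ↦ rexp ⟪w, y⟫).aestronglyMeasurable.smul hf)
    (ae_norm_rexp_inner_smul_le hdecay w)

lemma norm_fourierAlong_le (ha : 0 < a) (w : V) (z : ℂ) :
    ‖fourierAlong f w z‖ ≤ C * (π / a) ^ (Module.finrank ℝ V / 2 : ℝ) *
      rexp (π ^ 2 * ‖w‖ ^ 2 / a * z.im ^ 2) := by
  calc ‖fourierAlong f w z‖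
      ≤ ∫ y, C * rexp (-a * ‖y‖ ^ 2 + ⟪(2 * π * z.im) • w, y⟫) := by
        refine norm_integral_le_of_norm_le
          ((integrable_rexp_neg_mul_sq_norm_add_inner ha _).const_mul C) ?_
        filter_upwards [ae_norm_rexp_inner_smul_le hdecay ((2 * π * z.im) • w)] with y hy
        rwa [norm_smul, norm_cexp_neg_two_pi_I_mul_inner, ← abs_exp, ← Real.norm_eq_abs,
          ← norm_smul]
    _ = _ := by
        rw [integral_const_mul, integral_rexp_neg_mul_sq_norm_add_inner ha, ← mul_assoc, norm_smul,
          mul_pow, Real.norm_eq_abs, sq_abs]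
        congr 2
        field_simp
        ring

lemma differentiable_fourierAlong (ha : 0 < a) (hf : AEStronglyMeasurable f) (w : V) :
    Differentiable ℂ (fourierAlong f w) := by
  have hlaplace : Differentiable ℂ fun z : ℂ ↦ ∫ y, cexp (z * ⟪w, y⟫) • f y :=
    differentiable_integral_cexp_mul_smul
      (by fun_prop : Continuous fun y ↦ ⟪w, y⟫).aestronglyMeasurable fun t ↦ by
        simpa only [real_inner_smul_left] using integrable_rexp_inner_smul hdecay ha hf (t • w)
  exact hlaplace.comp (differentiable_id.const_mul (-2 * π * Complex.I))

variable {b C' : ℝ} (hab : π ^ 2 < a * b)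
  (hfourier : ∀ ξ, ‖𝓕 f ξ‖ ≤ C' * rexp (-b * ‖ξ‖ ^ 2))
include hab hfourier

lemma fourierAlong_eq_zero (ha : 0 < a) (hf : AEStronglyMeasurable f) {w : V} (hw : w ≠ 0) :
    fourierAlong f w = 0 := by
  have hw_pos : 0 < ‖w‖ ^ 2 := by positivity
  refine eq_zero_of_norm_le_exp_im_sq_of_norm_le_exp_neg_sq (B := C')
    (differentiable_fourierAlong hdecay ha hf w) (by positivity) (?_ : _ < b * ‖w‖ ^ 2)
    (norm_fourierAlong_le hdecay ha w) fun t ↦ ?_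
  · rw [div_lt_iff₀ ha]
    nlinarith
  · rw [fourierAlong_ofReal]
    refine (hfourier _).trans_eq ?_
    rw [norm_smul, mul_pow, Real.norm_eq_abs, sq_abs]
    ring_nf

theorem hardy_uncertainty_principle [Nontrivial V] [CompleteSpace E] (ha : 0 < a)
    (hf : AEStronglyMeasurable f) : f =ᵐ[volume] 0 := by
  have hintegrable : Integrable f := by simpa using integrable_rexp_inner_smul hdecay ha hf 0
  refine ae_eq_zero_of_fourier_eq_zero hintegrable (funext fun ξ ↦ ?_)
  obtain ⟨w, hw, t, rfl⟩ : ∃ w : V, w ≠ 0 ∧ ∃ t : ℝ, ξ = t • w := by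
    rcases eq_or_ne ξ 0 with rfl | hξ
    · obtain ⟨w, hw⟩ := exists_ne (0 : V)
      exact ⟨w, hw, 0, (zero_smul ℝ w).symm⟩
    · exact ⟨ξ, hξ, 1, (one_smul ℝ ξ).symm⟩
  rw [← fourierAlong_ofReal, fourierAlong_eq_zero hdecay hab hfourier ha hf hw]
  rfl

end FourierAlong

section Schrodinger

variable {V E : Type*} [NormedAddCommGroup V]

/-- The phase `exp (i ‖v‖² / (4 T))`: evaluated at `x - y` it is, up to a constant factor, the
kernel of the free Schrödinger evolution at time `T`. -/
noncomputable def quadraticPhase (T : ℝ) (v : V) : ℂ :=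
  cexp (Complex.I * ((‖v‖ ^ 2 : ℝ) / (4 * T)))

lemma norm_quadraticPhase (T : ℝ) (v : V) : ‖quadraticPhase T v‖ = 1 := by
  rw [quadraticPhase, ← Complex.norm_exp_I_mul_ofReal (‖v‖ ^ 2 / (4 * T))]
  push_cast
  rfl

lemma continuous_quadraticPhase (T : ℝ) : Continuous (quadraticPhase T : V → ℂ) := by
  unfold quadraticPhase
  fun_prop

variable [InnerProductSpace ℝ V]

lemma quadraticPhase_sub (T : ℝ) (x y : V) : quadraticPhase T (x - y) =
    quadraticPhase T x * (cexp (-(Complex.I * ⟪x, y⟫ / (2 * T))) * quadraticPhase T y) := by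
  simp only [quadraticPhase, ← Complex.exp_add, norm_sub_sq_real]
  push_cast
  ring_nf

variable [FiniteDimensional ℝ V] [MeasurableSpace V] [BorelSpace V]
  [NormedAddCommGroup E] [NormedSpace ℂ E]

lemma integral_quadraticPhase_sub_smul (T : ℝ) (f : V → E) (x : V) :
    ∫ y, quadraticPhase T (x - y) • f y =
      quadraticPhase T x • 𝓕 (fun y ↦ quadraticPhase T y • f y) ((4 * π * T)⁻¹ • x) := by
  rw [Real.fourier_eq', ← integral_smul]
  refine integral_congr_ae (.of_forall fun y ↦ ?_)
  have hphase : -(Complex.I * ⟪x, y⟫ / (2 * T)) =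
      ((-2 * π * ⟪y, (4 * π * T)⁻¹ • x⟫ : ℝ) : ℂ) * Complex.I := by
    rw [real_inner_smul_right, real_inner_comm]
    push_cast
    field_simp
    ring
  simp only [quadraticPhase_sub, hphase, mul_smul]

theorem dynamical_hardy_uncertainty_principle_general [Nontrivial V] [CompleteSpace E]
    {T α β C C' : ℝ} (hT : T ≠ 0) (hα : 0 < α) (hαβ : 1 / (16 * T ^ 2) < α * β)
    {f : V → E} (hf : AEStronglyMeasurable f)
    (hdecay : ∀ᵐ y, ‖f y‖ ≤ C * rexp (-α * ‖y‖ ^ 2)) {uT : V → E}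
    (huT : ∀ x, uT x = ∫ y, quadraticPhase T (x - y) • f y)
    (huTdecay : ∀ x, ‖uT x‖ ≤ C' * rexp (-β * ‖x‖ ^ 2)) :
    f =ᵐ[volume] 0 := by
  set g : V → E := fun y ↦ quadraticPhase T y • f y
  have hg_norm (y : V) : ‖g y‖ = ‖f y‖ := by rw [norm_smul, norm_quadraticPhase, one_mul]
  have hfourier (ξ : V) : ‖𝓕 g ξ‖ ≤ C' * rexp (-(16 * π ^ 2 * T ^ 2 * β) * ‖ξ‖ ^ 2) := calc
    ‖𝓕 g ξ‖ = ‖uT ((4 * π * T) • ξ)‖ := by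
      rw [huT, integral_quadraticPhase_sub_smul, norm_smul, norm_quadraticPhase, one_mul,
        inv_smul_smul₀ (by positivity)]
    _ ≤ C' * rexp (-β * ‖(4 * π * T) • ξ‖ ^ 2) := huTdecay _
    _ = _ := by
      rw [norm_smul, mul_pow, Real.norm_eq_abs, sq_abs]
      ring_nf
  have hab : π ^ 2 < α * (16 * π ^ 2 * T ^ 2 * β) := by
    rw [div_lt_iff₀ (by positivity)] at hαβ
    nlinarith [sq_pos_of_pos pi_pos]
  have hg : g =ᵐ[volume] 0 := hardy_uncertainty_principle (by simpa only [hg_norm] using hdecay)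
    hab hfourier hα ((continuous_quadraticPhase T).aestronglyMeasurable.smul hf)
  filter_upwards [hg] with y hy
  rw [Pi.zero_apply, ← norm_eq_zero, ← hg_norm, hy, Pi.zero_apply, norm_zero]

end Schrodinger

/-- **Dynamical Hardy uncertainty principle for the free Schrödinger evolution.**
If `|f y| ≤ C exp (-α ‖y‖²)`, and the (absolutely convergent) oscillatory
integral `u_T x = ∫ exp (i ‖x - y‖² / (4T)) f y dy` satisfies
`|u_T x| ≤ C' exp (-β ‖x‖²)` with `α β > 1/(16 T²)`, then `f = 0` a.e. -/
theorem dynamical_hardy_uncertainty_principle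
    (d : ℕ) (hd : 1 ≤ d) (T : ℝ) (hT : 0 < T)
    (α β C C' : ℝ) (hα : 0 < α) (hβ : 0 < β) (hC : 0 < C) (hC' : 0 < C')
    (hαβ : 1 / (16 * T ^ 2) < α * β)
    (f : EuclideanSpace ℝ (Fin d) → ℂ) (hf : Measurable f)
    (hdecay : ∀ y, ‖f y‖ ≤ C * Real.exp (-α * ‖y‖ ^ 2))
    (uT : EuclideanSpace ℝ (Fin d) → ℂ)
    (huT : ∀ x, uT x = ∫ y, Complex.exp (Complex.I * ((‖x - y‖ ^ 2 : ℝ) / (4 * T))) * f y)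
    (huTdecay : ∀ x, ‖uT x‖ ≤ C' * Real.exp (-β * ‖x‖ ^ 2)) :
    f =ᵐ[volume] 0 := by
  have : Nonempty (Fin d) := ⟨⟨0, hd⟩⟩
  exact dynamical_hardy_uncertainty_principle_general hT.ne' hα hαβ hf.aestronglyMeasurable
    (.of_forall hdecay) huT huTdecay
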